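/- Let f be an M-map with f(∅) ≠ 0, and extend log* f to the empty set by log* f(∅) = Log f(∅), the principal complex logarithm. Then the anticumulant of the cumulant recovers f: exp*(log* f)(a) = f(a) for every subset a ⊆ Ω (including a = ∅). -/

import Mathlib

open Finset

/-- The convolution product of M-maps: `(f * g)(a) = ∑_{b ⊆ a} f(b) · g(a \ b)`. -/
noncomputable def MMap.conv {Ω : Type*} [DecidableEq Ω] (f g : Finset Ω → ℂ) : Finset Ω → ℂ :=
  fun a => ∑ b ∈ a.powerset, f b * g (a \ b)

/-- The cumulant `log* f` on nonempty subsets: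
`log* f(a) = ∑_p (|p|−1)!·(−1)^{|p|−1}·(∏_{c ∈ p} f(c))/f(∅)^{|p|}`,
summed over all set partitions `p` of `a`, `|p|` being the number of blocks. -/
noncomputable def MMap.logStar {Ω : Type*} [DecidableEq Ω] (f : Finset Ω → ℂ) :
    Finset Ω → ℂ := fun a =>
  ∑ p : Finpartition a,
    (Nat.factorial (p.parts.card - 1) : ℂ) * (-1 : ℂ) ^ (p.parts.card - 1) *
      (∏ c ∈ p.parts, f c) / (f ∅) ^ p.parts.card

/-- The cumulant extended to the empty set by the principal complex logarithm:
`log* f(∅) = Log f(∅)`. -/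
noncomputable def MMap.logStarFull {Ω : Type*} [DecidableEq Ω] (f : Finset Ω → ℂ) :
    Finset Ω → ℂ := fun a =>
  if a = ∅ then Complex.log (f ∅) else MMap.logStar f a

/-- The anticumulant `exp* g`: `exp* g(∅) = e^{g(∅)}` and, for nonempty `a`,
`exp* g(a) = e^{g(∅)} · ∑_p ∏_{c ∈ p} g(c)`, summed over set partitions `p` of `a`. -/
noncomputable def MMap.expStar {Ω : Type*} [DecidableEq Ω] (g : Finset Ω → ℂ) :
    Finset Ω → ℂ := fun a =>
  if a = ∅ then Complex.exp (g ∅)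
  else Complex.exp (g ∅) * ∑ p : Finpartition a, ∏ c ∈ p.parts, g c

/-!
Think of an M-map as a power series in square-zero variables indexed by `Ω`, multiplied by
subset convolution `⋆`. A sum over set partitions weighted by `w |p|` is then the composition
`φ ∘ h`, where `φ` is the series with derivatives `w k` at `0` and the constant term of `h` is
disregarded. Keeping only the values at sets containing `x` is a derivation `D x`, and pulling
out the block containing `x` is the chain rule `D x (φ ∘ h) = D x h ⋆ (φ' ∘ h)`.

Normalise `f` to `h = f / f ∅`, and let `κ` be its cumulant. Both `exp κ` and `h` solve
`D x F = D x κ ⋆ F`: the former by the chain rule, and the latter because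
`D x κ = D x h ⋆ h⁻¹`. Such an equation has at most one solution with a given value at `∅`.
-/

open scoped Nat

namespace MMap

section Partition

variable {α : Type*} [GeneralizedBooleanAlgebra α] {a b : α}

lemma notMem_parts_sdiff (hb : b ≠ ⊥) (q : Finpartition (a \ b)) : b ∉ q.parts :=
  fun hbq => hb (disjoint_sdiff_self_right.eq_bot_of_le (q.le hbq))

variable [DecidableEq α]

lemma sup_parts_erase (p : Finpartition a) (hb : b ∈ p.parts) :
    (p.parts.erase b).sup id = a \ b := by
  have hdisj : Disjoint b ((p.parts.erase b).sup id) :=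
    p.supIndep (erase_subset b p.parts) hb (notMem_erase b p.parts)
  have hsup : b ⊔ (p.parts.erase b).sup id = a := by
    simpa only [insert_erase hb, p.sup_parts, id] using
      (sup_insert (s := p.parts.erase b) (f := id) (b := b)).symm
  calc (p.parts.erase b).sup id
      = (b ⊔ (p.parts.erase b).sup id) \ b := hdisj.sup_sdiff_cancel_left.symm
    _ = a \ b := congrArg (· \ b) hsup

/-- The partition of `a \ b` left after discarding the block `b` from a partition of `a`;
inverse to `Finpartition.extend`. -/
def eraseBlock (p : Finpartition a) (hb : b ∈ p.parts) : Finpartition (a \ b) :=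
  p.ofSubset (erase_subset b p.parts) (sup_parts_erase p hb)

end Partition

variable {Ω R : Type*} [DecidableEq Ω]

lemma sum_finpartition_sdiff {M : Type*} [AddCommMonoid M] {b s : Finset Ω} (hb : b ≠ ∅)
    (hbs : b ⊆ s) (F : Finset (Finset Ω) → M) :
    ∑ q : Finpartition (s \ b), F q.parts =
      ∑ p : Finpartition s with b ∈ p.parts, F (p.parts.erase b) := by
  refine sum_bij'
    (fun q _ => q.extend hb disjoint_sdiff_self_left (sdiff_sup_cancel hbs))
    (fun p hp => eraseBlock p (mem_filter.1 hp).2) ?_ ?_ ?_ ?_ ?_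
  · intro q _
    simp
  · intro p _
    exact mem_univ _
  · intro q _
    ext1
    exact erase_insert (notMem_parts_sdiff hb q)
  · intro p hp
    ext1
    exact insert_erase (mem_filter.1 hp).2
  · intro q _
    exact congrArg F (erase_insert (notMem_parts_sdiff hb q)).symm

lemma sum_powerset_sum_finpartition_sdiff {M : Type*} [AddCommMonoid M] (s : Finset Ω)
    (F : Finset Ω → Finset (Finset Ω) → M) :
    ∑ b ∈ s.powerset.erase ∅, ∑ q : Finpartition (s \ b), F b q.parts =
      ∑ p : Finpartition s, ∑ b ∈ p.parts, F b (p.parts.erase b) := by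
  calc ∑ b ∈ s.powerset.erase ∅, ∑ q : Finpartition (s \ b), F b q.parts
      = ∑ b ∈ s.powerset.erase ∅, ∑ p : Finpartition s with b ∈ p.parts,
          F b (p.parts.erase b) := by
        refine sum_congr rfl fun b hb => ?_
        obtain ⟨hb_ne, hbs⟩ := mem_erase.1 hb
        exact sum_finpartition_sdiff hb_ne (mem_powerset.1 hbs) (F b)
    _ = ∑ p : Finpartition s, ∑ b ∈ p.parts, F b (p.parts.erase b) := by
        refine sum_comm' fun b p => ?_
        simp only [mem_erase, mem_powerset, mem_filter, mem_univ, true_and, and_true]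
        exact ⟨fun h => h.2, fun hb => ⟨⟨p.ne_empty hb, p.subset hb⟩, hb⟩⟩

/-- Subset convolution, i.e. `MMap.conv` with arbitrary coefficients: the product of
power series in square-zero variables. -/
def subsetConv [NonUnitalNonAssocSemiring R] (f g : Finset Ω → R) : Finset Ω → R :=
  fun a => ∑ b ∈ a.powerset, f b * g (a \ b)

lemma subsetConv_comm [NonUnitalCommSemiring R] (f g : Finset Ω → R) :
    subsetConv f g = subsetConv g f := by
  funext a
  refine sum_nbij' (a \ ·) (a \ ·) ?_ ?_ ?_ ?_ ?_ <;> intro b hb <;> rw [mem_powerset] at *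
  · exact sdiff_subset
  · exact sdiff_subset
  · exact Finset.sdiff_sdiff_eq_self hb
  · exact Finset.sdiff_sdiff_eq_self hb
  · rw [Finset.sdiff_sdiff_eq_self hb, mul_comm]

lemma subsetConv_assoc [NonUnitalSemiring R] (f g h : Finset Ω → R) :
    subsetConv (subsetConv f g) h = subsetConv f (subsetConv g h) := by
  funext a
  simp only [subsetConv, sum_mul, mul_sum]
  rw [sum_sigma', sum_sigma']
  refine sum_nbij' (fun x => ⟨x.2, x.1 \ x.2⟩) (fun y => ⟨y.1 ∪ y.2, y.1⟩) ?_ ?_ ?_ ?_ ?_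
  all_goals
    rintro ⟨b, d⟩ hbd
    simp only [mem_sigma, mem_powerset] at *
  · exact ⟨hbd.2.trans hbd.1, sdiff_subset_sdiff hbd.1 subset_rfl⟩
  · exact ⟨union_subset hbd.1 (hbd.2.trans sdiff_subset), subset_union_left⟩
  · rw [union_sdiff_of_subset hbd.2]
  · rw [union_sdiff_cancel_left (disjoint_sdiff.mono_right hbd.2)]
  · rw [sdiff_sdiff_left, sup_eq_union, union_sdiff_of_subset hbd.2, mul_assoc]

lemma subsetConv_single_one [NonAssocSemiring R] (f : Finset Ω → R) :
    subsetConv f (Pi.single ∅ 1) = f := by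
  funext a
  have hzero (b) (hb : b ∈ a.powerset) (hne : b ≠ a) :
      f b * (Pi.single ∅ 1 : Finset Ω → R) (a \ b) = 0 := by
    rw [Pi.single_eq_of_ne, mul_zero]
    exact fun h => hne ((mem_powerset.1 hb).antisymm (sdiff_eq_empty_iff_subset.1 h))
  rw [subsetConv, sum_eq_single_of_mem a (mem_powerset_self a) hzero, sdiff_self, bot_eq_empty,
    Pi.single_eq_same, mul_one]

/-- The part of an M-map supported on the sets containing `x`. In terms of power series this is the
derivation `x · ∂/∂x`. -/
def pointed [Zero R] (x : Ω) (f : Finset Ω → R) : Finset Ω → R :=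
  fun a => if x ∈ a then f a else 0

lemma pointed_of_mem [Zero R] {x : Ω} {a : Finset Ω} (hx : x ∈ a) (f : Finset Ω → R) :
    pointed x f a = f a :=
  if_pos hx

lemma pointed_of_notMem [Zero R] {x : Ω} {a : Finset Ω} (hx : x ∉ a) (f : Finset Ω → R) :
    pointed x f a = 0 :=
  if_neg hx

lemma eq_of_pointed_eq_pointed_subsetConv [NonUnitalNonAssocSemiring R]
    {κ F G : Finset Ω → R} (hempty : F ∅ = G ∅)
    (hF : ∀ x, pointed x F = subsetConv (pointed x κ) F)
    (hG : ∀ x, pointed x G = subsetConv (pointed x κ) G) :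
    F = G := by
  funext a
  induction a using Finset.strongInduction with
  | H a ih =>
    obtain rfl | ⟨x, hx⟩ := a.eq_empty_or_nonempty
    · exact hempty
    have hconv : subsetConv (pointed x κ) F a = subsetConv (pointed x κ) G a := by
      refine sum_congr rfl fun b hb => ?_
      by_cases hxb : x ∈ b
      · rw [ih (a \ b) (sdiff_ssubset (mem_powerset.1 hb) ⟨x, hxb⟩)]
      · rw [pointed_of_notMem hxb, zero_mul, zero_mul]
    rw [← pointed_of_mem hx F, ← pointed_of_mem hx G, hF, hG, hconv]

section PartitionSum

variable [CommSemiring R]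

/-- The composition `φ ∘ h` of an M-map `h` with the power series `φ = ∑ k, w k * t ^ k / k!`, as a
sum over set partitions. Blocks are nonempty, so the value `h ∅` never enters. -/
def partitionSum (w : ℕ → R) (h : Finset Ω → R) : Finset Ω → R :=
  fun s => ∑ p : Finpartition s, w #p.parts * ∏ c ∈ p.parts, h c

lemma partitionSum_empty (w : ℕ → R) (h : Finset Ω → R) : partitionSum w h ∅ = w 0 := by
  let _ : Unique (Finpartition (∅ : Finset Ω)) := inferInstanceAs (Unique (Finpartition ⊥))
  have hparts : (default : Finpartition (∅ : Finset Ω)).parts = ∅ := rfl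
  rw [partitionSum, Fintype.sum_unique, hparts, card_empty, prod_empty, mul_one]

lemma partitionSum_congr (w : ℕ → R) {g h : Finset Ω → R} (hgh : ∀ c, c ≠ ∅ → g c = h c) :
    partitionSum w g = partitionSum w h := by
  funext s
  refine sum_congr rfl fun p _ => ?_
  rw [prod_congr rfl fun c hc => hgh c (p.ne_empty hc)]

lemma partitionSum_single_zero (h : Finset Ω → R) :
    partitionSum (Pi.single 0 1) h = Pi.single ∅ 1 := by
  funext s
  obtain rfl | hs := eq_or_ne s ∅
  · rw [partitionSum_empty, Pi.single_eq_same, Pi.single_eq_same]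
  · rw [Pi.single_eq_of_ne hs]
    refine sum_eq_zero fun p _ => ?_
    rw [Pi.single_eq_of_ne (card_ne_zero.2 (p.parts_nonempty hs)), zero_mul]

lemma subsetConv_partitionSum (g h : Finset Ω → R) (w : ℕ → R) (s : Finset Ω) :
    subsetConv g (partitionSum w h) s = g ∅ * partitionSum w h s +
      ∑ p : Finpartition s, w (#p.parts - 1) *
        ∑ b ∈ p.parts, g b * ∏ c ∈ p.parts.erase b, h c := by
  have hblock := sum_powerset_sum_finpartition_sdiff s
    fun b Q => g b * (w #Q * ∏ c ∈ Q, h c)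
  rw [subsetConv, ← add_sum_erase _ _ (empty_mem_powerset s), sdiff_empty]
  congr 1
  simp only [partitionSum, mul_sum]
  rw [hblock]
  refine sum_congr rfl fun p _ => sum_congr rfl fun b hb => ?_
  rw [card_erase_of_mem hb, mul_left_comm]

lemma pointed_partitionSum (x : Ω) (w : ℕ → R) (h : Finset Ω → R) :
    pointed x (partitionSum w h) =
      subsetConv (pointed x h) (partitionSum (fun k => w (k + 1)) h) := by
  funext s
  rw [subsetConv_partitionSum, pointed_of_notMem (notMem_empty x), zero_mul, zero_add]
  by_cases hx : x ∈ s
  · rw [pointed_of_mem hx]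
    refine sum_congr rfl fun p _ => ?_
    have hpart : p.part x ∈ p.parts := p.part_mem.2 hx
    have hother (b) (hb : b ∈ p.parts) (hne : b ≠ p.part x) :
        pointed x h b * ∏ c ∈ p.parts.erase b, h c = 0 := by
      rw [pointed_of_notMem fun hxb => hne (p.part_eq_of_mem hb hxb).symm, zero_mul]
    rw [sum_eq_single_of_mem _ hpart hother, pointed_of_mem (p.mem_part_self.2 hx),
      mul_prod_erase _ _ hpart, Nat.sub_add_cancel (card_pos.2 ⟨_, hpart⟩)]
  · rw [pointed_of_notMem hx]
    refine (sum_eq_zero fun p _ => ?_).symm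
    rw [sum_eq_zero fun b hb => ?_, mul_zero]
    rw [pointed_of_notMem fun hxb => hx (p.subset hb hxb), zero_mul]

lemma self_subsetConv_partitionSum (w : ℕ → R) (h : Finset Ω → R) (s : Finset Ω) :
    subsetConv h (partitionSum w h) s =
      h ∅ * partitionSum w h s + partitionSum (fun k => k * w (k - 1)) h s := by
  rw [subsetConv_partitionSum]
  congr 1
  refine sum_congr rfl fun p _ => ?_
  rw [sum_congr rfl fun b hb => mul_prod_erase p.parts h hb, sum_const, nsmul_eq_mul]
  ring

end PartitionSum

section Ring

/-- The `k`-th derivative of `1 / (1 + t)` at `t = 0`: the weights for which `partitionSum` gives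
the convolution inverse of an M-map with value `1` at `∅`. -/
def invCoeff (R : Type*) [CommRing R] (k : ℕ) : R := k ! * (-1) ^ k

/-- The `k`-th derivative of `log (1 + t)` at `t = 0`, for `1 ≤ k`: the weights for which
`partitionSum` gives the cumulant. The value at `k = 0` is junk; it only affects
`partitionSum (logCoeff R) h` at `∅`. -/
def logCoeff (R : Type*) [CommRing R] (k : ℕ) : R := (k - 1)! * (-1) ^ (k - 1)

variable [CommRing R]

lemma logCoeff_succ (k : ℕ) : logCoeff R (k + 1) = invCoeff R k :=
  rfl

lemma invCoeff_add_mul_invCoeff_pred (k : ℕ) :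
    invCoeff R k + k * invCoeff R (k - 1) = (Pi.single 0 1 : ℕ → R) k := by
  cases k with
  | zero => simp [invCoeff]
  | succ k =>
    rw [Pi.single_eq_of_ne k.succ_ne_zero, Nat.add_sub_cancel, invCoeff, invCoeff,
      Nat.factorial_succ]
    push_cast
    ring

lemma subsetConv_partitionSum_invCoeff {h : Finset Ω → R} (hempty : h ∅ = 1) :
    subsetConv h (partitionSum (invCoeff R) h) = Pi.single ∅ 1 := by
  funext s
  rw [self_subsetConv_partitionSum, hempty, one_mul, ← partitionSum_single_zero h]
  simp only [partitionSum, ← sum_add_distrib, ← add_mul, invCoeff_add_mul_invCoeff_pred]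

lemma pointed_eq_pointed_partitionSum_logCoeff_subsetConv {h : Finset Ω → R} (hempty : h ∅ = 1)
    (x : Ω) : pointed x h = subsetConv (pointed x (partitionSum (logCoeff R) h)) h :=
  calc pointed x h
      = subsetConv (pointed x h) (subsetConv (partitionSum (invCoeff R) h) h) := by
        rw [subsetConv_comm _ h, subsetConv_partitionSum_invCoeff hempty, subsetConv_single_one]
    _ = subsetConv (subsetConv (pointed x h) (partitionSum (invCoeff R) h)) h :=
        (subsetConv_assoc _ _ _).symm
    _ = subsetConv (pointed x (partitionSum (logCoeff R) h)) h := by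
        simp only [pointed_partitionSum, logCoeff_succ]

theorem partitionSum_one_partitionSum_logCoeff {h : Finset Ω → R} (hempty : h ∅ = 1) :
    partitionSum 1 (partitionSum (logCoeff R) h) = h :=
  eq_of_pointed_eq_pointed_subsetConv (by rw [partitionSum_empty, hempty, Pi.one_apply])
    (fun x => pointed_partitionSum x 1 _)
    (pointed_eq_pointed_partitionSum_logCoeff_subsetConv hempty)

end Ring

lemma expStar_eq_exp_mul_partitionSum (g : Finset Ω → ℂ) (a : Finset Ω) :
    expStar g a = Complex.exp (g ∅) * partitionSum 1 g a := by
  obtain rfl | ha := eq_or_ne a ∅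
  · rw [expStar, if_pos rfl, partitionSum_empty, Pi.one_apply, mul_one]
  · simp only [expStar, if_neg ha, partitionSum, Pi.one_apply, one_mul]

lemma logStar_eq_partitionSum (f : Finset Ω → ℂ) :
    logStar f = partitionSum (logCoeff ℂ) fun s => f s / f ∅ := by
  funext a
  refine sum_congr rfl fun p _ => ?_
  rw [prod_div_distrib, prod_const, mul_div_assoc, logCoeff]

lemma logStarFull_of_ne_empty (f : Finset Ω → ℂ) {a : Finset Ω} (ha : a ≠ ∅) :
    logStarFull f a = logStar f a :=
  if_neg ha

lemma exp_logStarFull_empty {f : Finset Ω → ℂ} (hf : f ∅ ≠ 0) :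
    Complex.exp (logStarFull f ∅) = f ∅ := by
  rw [logStarFull, if_pos rfl, Complex.exp_log hf]

end MMap

theorem expStar_logStar_general {Ω : Type*} [DecidableEq Ω]
    (f : Finset Ω → ℂ) (hf : f ∅ ≠ 0) (a : Finset Ω) :
    MMap.expStar (MMap.logStarFull f) a = f a := by
  rw [MMap.expStar_eq_exp_mul_partitionSum, MMap.exp_logStarFull_empty hf,
    MMap.partitionSum_congr 1 fun _ => MMap.logStarFull_of_ne_empty f,
    MMap.logStar_eq_partitionSum,
    MMap.partitionSum_one_partitionSum_logCoeff (div_self hf), mul_div_cancel₀ _ hf]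

/-- For an M-map `f` with `f(∅) ≠ 0`, the anticumulant of the cumulant recovers `f`:
`exp*(log* f)(a) = f(a)` for every subset `a ⊆ Ω`, including `a = ∅`. -/
theorem expStar_logStar {Ω : Type*} [DecidableEq Ω] [Fintype Ω]
    (f : Finset Ω → ℂ) (hf : f ∅ ≠ 0) (a : Finset Ω) :
    MMap.expStar (MMap.logStarFull f) a = f a :=
  expStar_logStar_general f hf a
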